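/- Let N ≥ 1, 0 < γ < min{2, N}, and let g : [0,∞) → [0,∞) be a non-decreasing Lipschitz function with g(0) = 0. Let u₀, v₀ : ℝ^N → ℝ be non-negative essentially bounded measurable functions with u₀ ≥ v₀ almost everywhere. If u and v are non-negative functions on ℝ^N × [0,∞), essentially bounded on ℝ^N × (0,T) for every T > 0, satisfying u(x,t) = ∫_{ℝ^N} G_t(x−y) u₀(y) dy + ∫₀ᵗ ∫_{ℝ^N} G_{t−σ}(x−y) |y|^{−γ} g(u(y,σ)) dy dσ and v(x,t) = ∫_{ℝ^N} G_t(x−y) v₀(y) dy + ∫₀ᵗ ∫_{ℝ^N} G_{t−σ}(x−y) |y|^{−γ} g(v(y,σ)) dy dσ almost everywhere, then u ≥ v almost everywhere on ℝ^N × (0,∞). -/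

import Mathlib

open MeasureTheory Filter Real

/-- The heat kernel `G_t(x) = (4πt)^{-N/2} exp(-|x|²/(4t))` on `ℝ^N`. -/
noncomputable def heatKernel (N : ℕ) (t : ℝ) (x : EuclideanSpace ℝ (Fin N)) : ℝ :=
  (4 * π * t) ^ (-(N : ℝ) / 2) * Real.exp (-‖x‖ ^ 2 / (4 * t))

/-- `u` is a non-negative mild solution of `u_t - Δu = |x|^{-γ} g(u)`,
`u(·,0) = u₀`, which is (measurable and) essentially bounded on
`ℝ^N × (0,T)` for every `T > 0`, the integral equation holding for almost
every `(x,t)` with `t ∈ (0,T]`. -/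
def IsLipSolution (N : ℕ) (γ : ℝ) (g : ℝ → ℝ)
    (u₀ : EuclideanSpace ℝ (Fin N) → ℝ)
    (u : EuclideanSpace ℝ (Fin N) → ℝ → ℝ) : Prop :=
  -- u is non-negative
  (∀ x t, 0 ≤ t → 0 ≤ u x t) ∧
  AEMeasurable (fun p : EuclideanSpace ℝ (Fin N) × ℝ => u p.1 p.2) ∧
  -- u is essentially bounded on ℝ^N × (0,T) for every T > 0
  (∀ T : ℝ, 0 < T → ∃ C : ℝ,
    ∀ᵐ p : EuclideanSpace ℝ (Fin N) × ℝ ∂volume,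
      p.2 ∈ Set.Ioo 0 T → |u p.1 p.2| ≤ C) ∧
  -- the integral equation, for a.e. (x,t) with 0 < t ≤ T
  (∀ T : ℝ, 0 < T →
    ∀ᵐ p : EuclideanSpace ℝ (Fin N) × ℝ ∂volume, p.2 ∈ Set.Ioc 0 T →
      u p.1 p.2 = (∫ y, heatKernel N p.2 (p.1 - y) * u₀ y) +
        ∫ σ in (0 : ℝ)..p.2, ∫ y,
          heatKernel N (p.2 - σ) (p.1 - y) * ‖y‖ ^ (-γ) * g (u y σ))

theorem heatKernel_nonneg (N : ℕ) {t : ℝ} (ht : 0 ≤ t) (x : EuclideanSpace ℝ (Fin N)) :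
    0 ≤ heatKernel N t x := by
  unfold heatKernel
  positivity

theorem heatKernel_zero_time {N : ℕ} (hN : 1 ≤ N) (x : EuclideanSpace ℝ (Fin N)) :
    heatKernel N 0 x = 0 := by
  have h : -(N : ℝ) / 2 ≠ 0 := by
    have : (1 : ℝ) ≤ N := by exact_mod_cast hN
    linarith
  simp [heatKernel, Real.zero_rpow h]

theorem heatKernel_le (N : ℕ) {t : ℝ} (ht : 0 < t) (x : EuclideanSpace ℝ (Fin N)) :
    heatKernel N t x ≤ (4 * π * t) ^ (-(N : ℝ) / 2) := by
  unfold heatKernel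
  refine mul_le_of_le_one_right (by positivity) (Real.exp_le_one_iff.2 ?_)
  rw [neg_div]
  exact neg_nonpos.2 (by positivity)

theorem measurable_heatKernel_uncurry (N : ℕ) :
    Measurable fun q : ℝ × EuclideanSpace ℝ (Fin N) => heatKernel N q.1 q.2 := by
  unfold heatKernel
  fun_prop

theorem integral_heatKernel (N : ℕ) {t : ℝ} (ht : 0 < t) :
    ∫ x, heatKernel N t x = 1 := by
  have h := GaussianFourier.integral_rexp_neg_mul_sq_norm
    (V := EuclideanSpace ℝ (Fin N)) (b := 1 / (4 * t)) (by positivity)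
  have h4 : (0 : ℝ) < 4 * π * t := by positivity
  have he : ∀ x : EuclideanSpace ℝ (Fin N),
      -‖x‖ ^ 2 / (4 * t) = -(1 / (4 * t)) * ‖x‖ ^ 2 := fun x => by ring
  simp only [heatKernel, he]
  rw [integral_const_mul, h, finrank_euclideanSpace_fin,
    show π / (1 / (4 * t)) = 4 * π * t by field_simp, ← Real.rpow_add h4]
  norm_num [neg_div]

theorem integrable_heatKernel (N : ℕ) {t : ℝ} (ht : 0 < t) :
    Integrable (heatKernel N t) :=
  Integrable.of_integral_ne_zero (by simp [integral_heatKernel N ht])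

theorem setIntegral_ball_norm_rpow_neg (N : ℕ) (γ : ℝ) {r : ℝ} (hr : 0 < r) :
    ∫ y in Metric.ball (0 : EuclideanSpace ℝ (Fin N)) r, ‖y‖ ^ (-γ) =
      r ^ ((N : ℝ) - γ) *
        ∫ y in Metric.ball (0 : EuclideanSpace ℝ (Fin N)) 1, ‖y‖ ^ (-γ) := by
  have h := Measure.setIntegral_comp_smul_of_pos (volume : Measure (EuclideanSpace ℝ (Fin N)))
    (fun y => ‖y‖ ^ (-γ)) (Metric.ball 0 1) hr
  have hs : ∀ y : EuclideanSpace ℝ (Fin N), ‖r • y‖ ^ (-γ) = r ^ (-γ) * ‖y‖ ^ (-γ) := fun y => by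
    rw [norm_smul, Real.norm_of_nonneg hr.le, Real.mul_rpow hr.le (norm_nonneg _)]
  simp only [hs, smul_unitBall hr.ne', Real.norm_of_nonneg hr.le, integral_const_mul,
    finrank_euclideanSpace_fin, smul_eq_mul] at h
  rw [sub_eq_add_neg, Real.rpow_add hr, mul_assoc, h, Real.rpow_natCast, ← mul_assoc,
    mul_inv_cancel₀ (by positivity), one_mul]

/-- The convolution of the heat kernel with `|y|^{-γ}` is bounded by `C t^{-γ/2}`. -/
theorem exists_integral_heatKernel_mul_norm_rpow_neg_le {N : ℕ} (hN : 1 ≤ N) {γ : ℝ}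
    (hγ0 : 0 < γ) (hγ : γ < N) :
    ∃ C : ℝ, 0 ≤ C ∧ ∀ t : ℝ, 0 < t → ∀ x : EuclideanSpace ℝ (Fin N),
      Integrable (fun y => heatKernel N t (x - y) * ‖y‖ ^ (-γ)) ∧
        ∫ y, heatKernel N t (x - y) * ‖y‖ ^ (-γ) ≤ C * t ^ (-γ / 2) := by
  set c := ∫ y in Metric.ball (0 : EuclideanSpace ℝ (Fin N)) 1, ‖y‖ ^ (-γ) with hc
  have hc0 : 0 ≤ c := integral_nonneg fun y => by positivity
  refine ⟨(4 * π) ^ (-(N : ℝ) / 2) * c + 1, by positivity, fun t ht x => ?_⟩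
  have hmeas : Measurable fun y : EuclideanSpace ℝ (Fin N) => ‖y‖ ^ (-γ) := by fun_prop
  set r := √t with hr
  have hr0 : 0 < r := Real.sqrt_pos.2 ht
  have hball : IntegrableOn (fun y : EuclideanSpace ℝ (Fin N) => ‖y‖ ^ (-γ))
      (Metric.ball 0 r) := by
    refine integrableOn_ball_of_norm_le_rpow (C := 1) (α := γ) (by simpa using hN)
      (by simpa using hγ) (ae_of_all _ fun y => ?_) hmeas.aestronglyMeasurable
    rw [one_mul, Real.norm_of_nonneg (by positivity)]
  have hG : Integrable fun y : EuclideanSpace ℝ (Fin N) => heatKernel N t (x - y) :=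
    (integrable_heatKernel N ht).comp_sub_left x
  have hGm : Measurable fun y : EuclideanSpace ℝ (Fin N) => heatKernel N t (x - y) :=
    (measurable_heatKernel_uncurry N).comp (f := fun y => (t, x - y)) (by fun_prop)
  have hrt : r ^ (-γ) = t ^ (-γ / 2) := by
    rw [hr, Real.sqrt_eq_rpow, ← Real.rpow_mul ht.le]
    ring_nf
  set A := (4 * π * t) ^ (-(N : ℝ) / 2) with hA
  have hA0 : 0 ≤ A := by positivity
  have hdom : Integrable fun y : EuclideanSpace ℝ (Fin N) =>
      A * (Metric.ball 0 r).indicator (fun y => ‖y‖ ^ (-γ)) y +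
        t ^ (-γ / 2) * heatKernel N t (x - y) :=
    (((integrable_indicator_iff measurableSet_ball).2 hball).const_mul _).add (hG.const_mul _)
  have hle : ∀ y : EuclideanSpace ℝ (Fin N), heatKernel N t (x - y) * ‖y‖ ^ (-γ) ≤
      A * (Metric.ball 0 r).indicator (fun y => ‖y‖ ^ (-γ)) y +
        t ^ (-γ / 2) * heatKernel N t (x - y) := fun y => by
    have hG0 := heatKernel_nonneg N ht.le (x - y)
    by_cases hy : y ∈ Metric.ball (0 : EuclideanSpace ℝ (Fin N)) r
    · rw [Set.indicator_of_mem hy]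
      have h1 : heatKernel N t (x - y) * ‖y‖ ^ (-γ) ≤ A * ‖y‖ ^ (-γ) := by
        gcongr
        exact heatKernel_le N ht _
      have h2 : 0 ≤ t ^ (-γ / 2) * heatKernel N t (x - y) := by positivity
      linarith
    · rw [Set.indicator_of_notMem hy, mul_zero, zero_add, mul_comm]
      gcongr
      rw [← hrt]
      exact Real.rpow_le_rpow_of_nonpos hr0 (by simpa using hy) (by linarith)
  have hint : Integrable fun y => heatKernel N t (x - y) * ‖y‖ ^ (-γ) := by
    refine hdom.mono' (hGm.mul hmeas).aestronglyMeasurable (ae_of_all _ fun y => ?_)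
    have hG0 := heatKernel_nonneg N ht.le (x - y)
    rw [Real.norm_of_nonneg (by positivity)]
    exact hle y
  refine ⟨hint, (integral_mono hint hdom hle).trans_eq ?_⟩
  rw [integral_add (((integrable_indicator_iff measurableSet_ball).2 hball).const_mul _)
    (hG.const_mul _), integral_const_mul, integral_const_mul,
    integral_indicator measurableSet_ball, setIntegral_ball_norm_rpow_neg N γ hr0, ← hc,
    integral_sub_left_eq_self (heatKernel N t) volume x, integral_heatKernel N ht, hA,
    Real.mul_rpow (by positivity) ht.le, hr, Real.sqrt_eq_rpow, ← Real.rpow_mul ht.le]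
  have : t ^ (-(N : ℝ) / 2) * t ^ (1 / 2 * ((N : ℝ) - γ)) = t ^ (-γ / 2) := by
    rw [← Real.rpow_add ht]
    ring_nf
  linear_combination (4 * π) ^ (-(N : ℝ) / 2) * c * this

/-- With respect to the weight `exp (lam * t)`, the Duhamel operator with potential `|y|^{-γ}` has
arbitrarily small norm once `lam` is large. -/
theorem exists_integral_duhamel_exp_le {N : ℕ} (hN : 1 ≤ N) {γ : ℝ}
    (hγ0 : 0 < γ) (hγ : γ < N) (hγ2 : γ < 2) {ε : ℝ} (hε : 0 < ε) :
    ∃ lam : ℝ, 0 < lam ∧ ∀ t : ℝ, 0 < t → ∀ x : EuclideanSpace ℝ (Fin N),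
      Integrable (fun q : EuclideanSpace ℝ (Fin N) × ℝ =>
          heatKernel N (t - q.2) (x - q.1) * ‖q.1‖ ^ (-γ) * Real.exp (lam * q.2))
        (volume.prod (volume.restrict (Set.Ioc 0 t))) ∧
      ∫ q : EuclideanSpace ℝ (Fin N) × ℝ,
          heatKernel N (t - q.2) (x - q.1) * ‖q.1‖ ^ (-γ) * Real.exp (lam * q.2)
        ∂(volume.prod (volume.restrict (Set.Ioc 0 t))) ≤ ε * Real.exp (lam * t) := by
  obtain ⟨C, hC0, hC⟩ := exists_integral_heatKernel_mul_norm_rpow_neg_le hN hγ0 hγ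
  have ha : 0 < 1 - γ / 2 := by linarith
  obtain ⟨lam, hlam, hsmall⟩ : ∃ lam : ℝ, 0 < lam ∧
      C * ((1 / lam) ^ (1 - γ / 2) * Real.Gamma (1 - γ / 2)) ≤ ε := by
    have h : Tendsto (fun l : ℝ => C * ((1 / l) ^ (1 - γ / 2) * Real.Gamma (1 - γ / 2)))
        atTop (nhds 0) := by
      have h1 : Tendsto (fun l : ℝ => (1 / l) ^ (1 - γ / 2)) atTop (nhds 0) := by
        have := (tendsto_inv_atTop_zero (𝕜 := ℝ)).rpow_const (p := 1 - γ / 2) (Or.inr ha.le)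
        simpa [Real.zero_rpow ha.ne'] using this
      simpa using (h1.mul_const (Real.Gamma (1 - γ / 2))).const_mul C
    obtain ⟨l, h1, h2⟩ := ((h.eventually_lt_const hε).and (eventually_gt_atTop 0)).exists
    exact ⟨l, h2, h1.le⟩
  refine ⟨lam, hlam, fun t ht x => ?_⟩
  set φ : ℝ → ℝ := (Set.Ioi 0).indicator
    fun s => s ^ (1 - γ / 2 - 1) * Real.exp (-(lam * s)) with hφ
  have hval : ∫ s, φ s = (1 / lam) ^ (1 - γ / 2) * Real.Gamma (1 - γ / 2) := by
    rw [hφ, integral_indicator measurableSet_Ioi,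
      Real.integral_rpow_mul_exp_neg_mul_Ioi ha hlam]
  have hφint : Integrable φ := by
    refine Integrable.of_integral_ne_zero ?_
    rw [hval]
    have := Real.Gamma_pos_of_pos ha
    positivity
  have hφ0 : ∀ s, 0 ≤ φ s := fun s =>
    Set.indicator_nonneg (fun s (hs : 0 < s) => by positivity) s
  set f : EuclideanSpace ℝ (Fin N) × ℝ → ℝ := fun q =>
    heatKernel N (t - q.2) (x - q.1) * ‖q.1‖ ^ (-γ) * Real.exp (lam * q.2) with hf
  set ν := (volume : Measure ℝ).restrict (Set.Ioc 0 t) with hν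
  have hfm : Measurable f := by
    refine Measurable.mul (Measurable.mul ?_ (by fun_prop)) (by fun_prop)
    exact (measurable_heatKernel_uncurry N).comp
      (f := fun q : EuclideanSpace ℝ (Fin N) × ℝ => (t - q.2, x - q.1)) (by fun_prop)
  have hdom : Integrable (fun σ => C * Real.exp (lam * t) * φ (t - σ)) :=
    (hφint.comp_sub_left t).const_mul _
  have hslice : ∀ σ ∈ Set.Ioc 0 t, Integrable (fun y => f (y, σ)) ∧
      (∀ y, 0 ≤ f (y, σ)) ∧ ∫ y, f (y, σ) ≤ C * Real.exp (lam * t) * φ (t - σ) := by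
    intro σ hσ
    rcases hσ.2.eq_or_lt with rfl | hlt
    · simp [hf, heatKernel_zero_time hN, hφ]
    · have hs : 0 < t - σ := sub_pos.2 hlt
      obtain ⟨h1, h2⟩ := hC (t - σ) hs x
      refine ⟨h1.mul_const (Real.exp (lam * σ)), fun y => ?_, ?_⟩
      · have := heatKernel_nonneg N hs.le (x - y)
        simp only [hf]
        positivity
      · simp only [hf]
        rw [integral_mul_const, hφ, Set.indicator_of_mem (Set.mem_Ioi.2 hs)]
        refine (mul_le_mul_of_nonneg_right h2 (Real.exp_nonneg _)).trans_eq ?_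
        have : Real.exp (lam * σ) = Real.exp (lam * t) * Real.exp (-(lam * (t - σ))) := by
          rw [← Real.exp_add]
          ring_nf
        rw [this, show 1 - γ / 2 - 1 = -γ / 2 by ring]
        ring
  have hslice_ae : ∀ᵐ σ ∂ν, Integrable (fun y => f (y, σ)) ∧
      (∀ y, 0 ≤ f (y, σ)) ∧ ∫ y, f (y, σ) ≤ C * Real.exp (lam * t) * φ (t - σ) :=
    (ae_restrict_mem measurableSet_Ioc).mono hslice
  have hfint : Integrable f (volume.prod ν) := by
    rw [integrable_prod_iff' hfm.aestronglyMeasurable]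
    refine ⟨hslice_ae.mono fun σ h => h.1, ?_⟩
    refine hdom.restrict.mono' ?_ ?_
    · exact (hfm.norm.stronglyMeasurable.integral_prod_left' (μ := volume)).aestronglyMeasurable
    · filter_upwards [hslice_ae] with σ ⟨_, h2, h3⟩
      rw [Real.norm_of_nonneg (integral_nonneg fun y => norm_nonneg _)]
      simpa only [Real.norm_of_nonneg (h2 _)] using h3
  refine ⟨hfint, ?_⟩
  rw [integral_prod_symm f hfint]
  calc ∫ σ, (∫ y, f (y, σ)) ∂ν
      ≤ ∫ σ, C * Real.exp (lam * t) * φ (t - σ) ∂ν :=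
        integral_mono_ae hfint.integral_prod_right hdom.restrict
          (hslice_ae.mono fun σ h => h.2.2)
    _ ≤ ∫ σ, C * Real.exp (lam * t) * φ (t - σ) :=
        setIntegral_le_integral hdom (ae_of_all _ fun σ => by
          have := hφ0 (t - σ)
          positivity)
    _ = C * ((1 / lam) ^ (1 - γ / 2) * Real.Gamma (1 - γ / 2)) * Real.exp (lam * t) := by
        rw [integral_const_mul, integral_sub_left_eq_self φ volume t, hval]
        ring
    _ ≤ ε * Real.exp (lam * t) := by gcongr

theorem ae_prod_restrict_Ioc_of_ae {N : ℕ} {P : EuclideanSpace ℝ (Fin N) × ℝ → Prop} {t T : ℝ}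
    (htT : t < T) (h : ∀ᵐ p : EuclideanSpace ℝ (Fin N) × ℝ, p.2 ∈ Set.Ioo 0 T → P p) :
    ∀ᵐ q : EuclideanSpace ℝ (Fin N) × ℝ ∂(volume.prod (volume.restrict (Set.Ioc 0 t))),
      q.2 ∈ Set.Ioc 0 t ∧ P q := by
  have h1 : ∀ᵐ q : EuclideanSpace ℝ (Fin N) × ℝ ∂(volume.prod (volume.restrict (Set.Ioc 0 t))),
      q.2 ∈ Set.Ioo 0 T → P q :=
    (Measure.AbsolutelyContinuous.rfl.prod Measure.restrict_le_self.absolutelyContinuous).ae_le h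
  have h2 : ∀ᵐ q : EuclideanSpace ℝ (Fin N) × ℝ ∂(volume.prod (volume.restrict (Set.Ioc 0 t))),
      q.2 ∈ Set.Ioc 0 t :=
    Measure.quasiMeasurePreserving_snd.ae (ae_restrict_mem measurableSet_Ioc)
  filter_upwards [h1, h2] with q h1 h2
  exact ⟨h2, h1 ⟨h2.1, h2.2.trans_lt htT⟩⟩

theorem continuous_comp_max_zero_of_lipschitz_nonneg {g : ℝ → ℝ} {L : ℝ} (hL : 0 < L)
    (hglip : ∀ r s : ℝ, 0 ≤ r → 0 ≤ s → |g r - g s| ≤ L * |r - s|) :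
    Continuous fun r => g (max r 0) := by
  refine (LipschitzWith.of_dist_le_mul (K := ⟨L, hL.le⟩) fun r s => ?_).continuous
  refine (hglip _ _ (le_max_right _ _) (le_max_right _ _)).trans ?_
  exact mul_le_mul_of_nonneg_left (abs_max_sub_max_le_abs r s 0) hL.le

/-- The Duhamel integrand of a bounded non-negative function is integrable in space-time. -/
theorem integrable_duhamel {N : ℕ} {γ lam L B t T : ℝ} {g : ℝ → ℝ} (hlam : 0 < lam) (hL : 0 < L)
    (hglip : ∀ r s : ℝ, 0 ≤ r → 0 ≤ s → |g r - g s| ≤ L * |r - s|) (hg0 : g 0 = 0)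
    {w : EuclideanSpace ℝ (Fin N) → ℝ → ℝ} (hw0 : ∀ x t, 0 ≤ t → 0 ≤ w x t)
    (hwm : AEMeasurable fun p : EuclideanSpace ℝ (Fin N) × ℝ => w p.1 p.2)
    (hwB : ∀ᵐ p : EuclideanSpace ℝ (Fin N) × ℝ, p.2 ∈ Set.Ioo 0 T → |w p.1 p.2| ≤ B)
    (htT : t < T) (x : EuclideanSpace ℝ (Fin N))
    (hk : Integrable (fun q : EuclideanSpace ℝ (Fin N) × ℝ =>
          heatKernel N (t - q.2) (x - q.1) * ‖q.1‖ ^ (-γ) * Real.exp (lam * q.2))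
        (volume.prod (volume.restrict (Set.Ioc 0 t)))) :
    Integrable (fun q : EuclideanSpace ℝ (Fin N) × ℝ =>
        heatKernel N (t - q.2) (x - q.1) * ‖q.1‖ ^ (-γ) * g (w q.1 q.2))
      (volume.prod (volume.restrict (Set.Ioc 0 t))) := by
  have hae := ae_prod_restrict_Ioc_of_ae htT hwB
  have hkm : Measurable fun q : EuclideanSpace ℝ (Fin N) × ℝ =>
      heatKernel N (t - q.2) (x - q.1) * ‖q.1‖ ^ (-γ) := by
    refine Measurable.mul ?_ (by fun_prop)
    exact (measurable_heatKernel_uncurry N).comp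
      (f := fun q : EuclideanSpace ℝ (Fin N) × ℝ => (t - q.2, x - q.1)) (by fun_prop)
  have hgw : AEMeasurable (fun q : EuclideanSpace ℝ (Fin N) × ℝ => g (w q.1 q.2))
      (volume.prod (volume.restrict (Set.Ioc 0 t))) := by
    refine ((continuous_comp_max_zero_of_lipschitz_nonneg hL hglip).measurable.comp_aemeasurable
      (hwm.mono_ac (Measure.AbsolutelyContinuous.rfl.prod
        Measure.restrict_le_self.absolutelyContinuous))).congr ?_
    filter_upwards [hae] with q hq
    simp [max_eq_left (hw0 q.1 q.2 hq.1.1.le)]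
  refine (hk.const_mul (L * B)).mono' (hkm.aemeasurable.mul hgw).aestronglyMeasurable ?_
  filter_upwards [hae] with q hq
  have hw := hw0 q.1 q.2 hq.1.1.le
  have hgB : |g (w q.1 q.2)| ≤ L * B := by
    have h := hglip (w q.1 q.2) 0 hw le_rfl
    rw [hg0, sub_zero, sub_zero] at h
    exact h.trans (mul_le_mul_of_nonneg_left hq.2 hL.le)
  have hLB : 0 ≤ L * B := (abs_nonneg _).trans hgB
  have hk0 : 0 ≤ heatKernel N (t - q.2) (x - q.1) * ‖q.1‖ ^ (-γ) :=
    mul_nonneg (heatKernel_nonneg N (sub_nonneg.2 hq.1.2) _) (by positivity)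
  have hexp : 1 ≤ Real.exp (lam * q.2) :=
    Real.one_le_exp (mul_nonneg hlam.le hq.1.1.le)
  rw [norm_mul, Real.norm_of_nonneg hk0, Real.norm_eq_abs]
  calc _ ≤ heatKernel N (t - q.2) (x - q.1) * ‖q.1‖ ^ (-γ) * (L * B) := by gcongr
    _ = L * B * (heatKernel N (t - q.2) (x - q.1) * ‖q.1‖ ^ (-γ)) := mul_comm _ _
    _ ≤ L * B * (heatKernel N (t - q.2) (x - q.1) * ‖q.1‖ ^ (-γ) * Real.exp (lam * q.2)) :=
        mul_le_mul_of_nonneg_left (le_mul_of_one_le_right hk0 hexp) hLB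

theorem integral_heatKernel_mul_mono {N : ℕ} {t : ℝ} (ht : 0 < t) (x : EuclideanSpace ℝ (Fin N))
    {a b : EuclideanSpace ℝ (Fin N) → ℝ} (ham : AEMeasurable a) (hbm : AEMeasurable b)
    (ha : ∃ C : ℝ, ∀ᵐ y, |a y| ≤ C) (hb : ∃ C : ℝ, ∀ᵐ y, |b y| ≤ C)
    (hab : ∀ᵐ y, a y ≤ b y) :
    ∫ y, heatKernel N t (x - y) * a y ≤ ∫ y, heatKernel N t (x - y) * b y := by
  have hG : Integrable fun y : EuclideanSpace ℝ (Fin N) => heatKernel N t (x - y) :=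
    (integrable_heatKernel N ht).comp_sub_left x
  obtain ⟨A, hA⟩ := ha
  obtain ⟨B, hB⟩ := hb
  refine integral_mono_ae (hG.mul_bdd ham.aestronglyMeasurable hA)
    (hG.mul_bdd hbm.aestronglyMeasurable hB) ?_
  filter_upwards [hab] with y hy
  exact mul_le_mul_of_nonneg_left hy (heatKernel_nonneg N ht.le _)

/-- Comparison principle for `u_t - Δu = |x|^{-γ} g(u)` with a non-decreasing
Lipschitz nonlinearity `g`, `g(0) = 0`: if `u₀ ≥ v₀` a.e., then the
corresponding mild solutions satisfy `u ≥ v` a.e. on `ℝ^N × (0,∞)`. -/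
theorem lipschitz_comparison (N : ℕ) (hN : 1 ≤ N) (γ : ℝ)
    (hγ0 : 0 < γ) (hγ : γ < min 2 (N : ℝ))
    (g : ℝ → ℝ)
    (hgnn : ∀ r : ℝ, 0 ≤ r → 0 ≤ g r)
    (hgmono : ∀ r s : ℝ, 0 ≤ r → r ≤ s → g r ≤ g s)
    (L : ℝ) (hL : 0 < L)
    (hglip : ∀ r s : ℝ, 0 ≤ r → 0 ≤ s → |g r - g s| ≤ L * |r - s|)
    (hg0 : g 0 = 0)
    (u₀ v₀ : EuclideanSpace ℝ (Fin N) → ℝ)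
    (hu₀m : AEMeasurable u₀) (hv₀m : AEMeasurable v₀)
    (hu₀nn : ∀ᵐ x ∂volume, 0 ≤ u₀ x) (hv₀nn : ∀ᵐ x ∂volume, 0 ≤ v₀ x)
    (hu₀b : ∃ C : ℝ, ∀ᵐ x ∂volume, |u₀ x| ≤ C)
    (hv₀b : ∃ C : ℝ, ∀ᵐ x ∂volume, |v₀ x| ≤ C)
    (hle : ∀ᵐ x ∂volume, v₀ x ≤ u₀ x)
    (u v : EuclideanSpace ℝ (Fin N) → ℝ → ℝ)
    (hu : IsLipSolution N γ g u₀ u) (hv : IsLipSolution N γ g v₀ v) :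
    ∀ᵐ p : EuclideanSpace ℝ (Fin N) × ℝ ∂volume,
      0 < p.2 → v p.1 p.2 ≤ u p.1 p.2 := by
  have hγN : γ < N := hγ.trans_le (min_le_right _ _)
  have hγ2 : γ < 2 := hγ.trans_le (min_le_left _ _)
  obtain ⟨lam, hlam, hK⟩ := exists_integral_duhamel_exp_le hN hγ0 hγN hγ2
    (ε := 1 / (2 * L)) (by positivity)
  obtain ⟨hu0, hum, hub, hueq⟩ := hu
  obtain ⟨hv0, hvm, hvb, hveq⟩ := hv
  have key : ∀ T : ℝ, 0 < T → ∀ᵐ p : EuclideanSpace ℝ (Fin N) × ℝ,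
      p.2 ∈ Set.Ioo 0 T → v p.1 p.2 ≤ u p.1 p.2 := by
    intro T hT
    obtain ⟨A, hA⟩ := hub T hT
    obtain ⟨B, hB⟩ := hvb T hT
    have step : ∀ m : ℝ, 0 ≤ m →
        (∀ᵐ p : EuclideanSpace ℝ (Fin N) × ℝ, p.2 ∈ Set.Ioo 0 T →
          v p.1 p.2 - u p.1 p.2 ≤ m * Real.exp (lam * p.2)) →
        ∀ᵐ p : EuclideanSpace ℝ (Fin N) × ℝ, p.2 ∈ Set.Ioo 0 T →
          v p.1 p.2 - u p.1 p.2 ≤ m / 2 * Real.exp (lam * p.2) := by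
      intro m hm hbound
      filter_upwards [hueq T hT, hveq T hT] with p hup hvp hp
      obtain ⟨x, t⟩ := p
      obtain ⟨ht, htT⟩ := hp
      simp only at ht htT hup hvp ⊢
      obtain ⟨hk, hkle⟩ := hK t ht x
      have hiu := integrable_duhamel hlam hL hglip hg0 hu0 hum hA htT x hk
      have hiv := integrable_duhamel hlam hL hglip hg0 hv0 hvm hB htT x hk
      have hinit := integral_heatKernel_mul_mono ht x hv₀m hu₀m hv₀b hu₀b hle
      rw [hup ⟨ht, htT.le⟩, hvp ⟨ht, htT.le⟩, intervalIntegral.integral_of_le ht.le,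
        intervalIntegral.integral_of_le ht.le]
      have hpu := integral_prod_symm _ hiu
      have hpv := integral_prod_symm _ hiv
      simp only at hpu hpv
      rw [← hpu, ← hpv]
      have hmono := integral_mono_ae (hiv.sub hiu) (hk.const_mul (L * m)) (by
        filter_upwards [ae_prod_restrict_Ioc_of_ae htT hbound] with q hq
        have hqu := hu0 q.1 q.2 hq.1.1.le
        have hqv := hv0 q.1 q.2 hq.1.1.le
        have hk0 : 0 ≤ heatKernel N (t - q.2) (x - q.1) * ‖q.1‖ ^ (-γ) :=
          mul_nonneg (heatKernel_nonneg N (sub_nonneg.2 hq.1.2) _) (by positivity)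
        have hdiff : g (v q.1 q.2) - g (u q.1 q.2) ≤ L * (m * Real.exp (lam * q.2)) := by
          rcases le_total (u q.1 q.2) (v q.1 q.2) with h | h
          · have h1 := (le_abs_self _).trans (hglip _ _ hqv hqu)
            rw [abs_of_nonneg (sub_nonneg.2 h)] at h1
            exact h1.trans (mul_le_mul_of_nonneg_left hq.2 hL.le)
          · have h1 := hgmono _ _ hqv h
            have h2 : 0 ≤ L * (m * Real.exp (lam * q.2)) := by positivity
            linarith
        have := mul_le_mul_of_nonneg_left hdiff hk0
        simp only [Pi.sub_apply]
        linarith)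
      rw [integral_sub' hiv hiu, integral_const_mul] at hmono
      have hfin := mul_le_mul_of_nonneg_left hkle (mul_nonneg hL.le hm)
      have hcalc : L * m * (1 / (2 * L) * Real.exp (lam * t)) = m / 2 * Real.exp (lam * t) := by
        field_simp
      linarith
    have hall : ∀ n : ℕ, ∀ᵐ p : EuclideanSpace ℝ (Fin N) × ℝ, p.2 ∈ Set.Ioo 0 T →
        v p.1 p.2 - u p.1 p.2 ≤ |B| / 2 ^ n * Real.exp (lam * p.2) := by
      intro n
      induction n with
      | zero =>
        filter_upwards [hB] with p hp ht
        have h1 := (le_abs_self _).trans ((hp ht).trans (le_abs_self B))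
        have h2 := hu0 p.1 p.2 ht.1.le
        have h3 : 1 ≤ Real.exp (lam * p.2) := Real.one_le_exp (mul_nonneg hlam.le ht.1.le)
        have h4 := le_mul_of_one_le_right (abs_nonneg B) h3
        simp only [pow_zero, div_one]
        linarith
      | succ n ih =>
        have h := step _ (by positivity) ih
        simpa only [pow_succ, div_div] using h
    filter_upwards [ae_all_iff.2 hall] with p hp ht
    have hlim : Tendsto (fun n : ℕ => |B| / 2 ^ n * Real.exp (lam * p.2)) atTop (nhds 0) := by
      have h := (tendsto_inv_atTop_zero.comp
        (tendsto_pow_atTop_atTop_of_one_lt (one_lt_two (α := ℝ)))).const_mul |B|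
      simpa [div_eq_mul_inv] using h.mul_const (Real.exp (lam * p.2))
    exact sub_nonpos.1 (ge_of_tendsto' hlim fun n => hp n ht)
  have hnat := ae_all_iff.2 fun n : ℕ => key (n + 1) (by positivity)
  filter_upwards [hnat] with p hp ht
  obtain ⟨n, hn⟩ := exists_nat_gt p.2
  exact hp n ⟨ht, by linarith⟩
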